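/- Let N ≥ 1 and k ≥ 1 be integers, let w ∈ ℝ, and let u : ℝ^N \ {0} → ℝ be smooth and homogeneous of degree w, i.e. u(t·x) = t^w u(x) for all t > 0 and all x ≠ 0. Then on ℝ^N \ {0}, Δ^k( |x|²·u ) = |x|²·Δ^k u + 2k(2w + N − 2k + 2)·Δ^{k−1} u. In particular, if w = k − 1 − N/2, then Δ^k( |x|²·u ) = |x|²·Δ^k u. -/

import Mathlib

/-- The Euclidean Laplacian `Δu = ∑ i, ∂²u/∂xᵢ²` of a function on `ℝᴺ`. -/
noncomputable def lap {N : ℕ} (f : EuclideanSpace ℝ (Fin N) → ℝ)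
    (x : EuclideanSpace ℝ (Fin N)) : ℝ :=
  ∑ i, fderiv ℝ (fun y => fderiv ℝ f y (EuclideanSpace.single i 1)) x
    (EuclideanSpace.single i 1)

/-!
Write `n = dim E`, `m` for multiplication by `‖x‖²`, `X f x = Df(x) x` for the Euler field. The
product rule gives the commutator `[Δ, m] = 4 X + 2 n`. If `u` is homogeneous of degree `w`, then
`Δʲ u` is homogeneous of degree `w - 2 j`, so by Euler's identity `[Δ, m]` acts on it as the scalar
`4 (w - 2 j) + 2 n`. Summing over the `k` commutators in `[Δᵏ, m] = ∑ Δᵏ⁻¹⁻ʲ [Δ, m] Δʲ` gives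
`∑ j < k, (4 (w - 2 j) + 2 n) = 2 k (2 w + n - 2 k + 2)`.
-/

section

open Filter Topology Module InnerProductSpace Laplacian

variable {E F ι : Type*} [NormedAddCommGroup E] [NormedAddCommGroup F] [NormedSpace ℝ F]

section NormedSpace

variable [NormedSpace ℝ E]

/-- `u` is positively homogeneous of degree `w` on `s`. The set `s` need not be a cone: the scaling
identity is required whenever both `x` and `t • x` lie in `s`. -/
def IsHomogeneousOn (w : ℝ) (u : E → F) (s : Set E) : Prop :=
  ∀ t : ℝ, 0 < t → ∀ x ∈ s, t • x ∈ s → u (t • x) = t ^ w • u x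

theorem IsHomogeneousOn.fderiv_apply_self {w : ℝ} {u : E → F} {s : Set E} {x : E}
    (hhom : IsHomogeneousOn w u s) (hs : s ∈ 𝓝 x) (hu : DifferentiableAt ℝ u x) :
    fderiv ℝ u x x = w • u x := by
  have hray : HasDerivAt (fun t : ℝ => t • x) x 1 := by
    simpa using (hasDerivAt_id (1 : ℝ)).smul_const x
  have hchain : HasDerivAt (fun t : ℝ => u (t • x)) (fderiv ℝ u x x) 1 := by
    refine HasFDerivAt.comp_hasDerivAt (l := u) 1 ?_ hray
    simpa using hu.hasFDerivAt
  have hpow : HasDerivAt (fun t : ℝ => t ^ w • u x) (w • u x) 1 := by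
    simpa using (Real.hasDerivAt_rpow_const (p := w) (Or.inl one_ne_zero)).smul_const (u x)
  have hscale : (fun t : ℝ => u (t • x)) =ᶠ[𝓝 1] fun t => t ^ w • u x := by
    have hmem : ∀ᶠ t : ℝ in 𝓝 1, t • x ∈ s :=
      hray.continuousAt.eventually_mem (by simpa using hs)
    filter_upwards [Ioi_mem_nhds one_pos, hmem] with t ht htx
    exact hhom t ht x (mem_of_mem_nhds hs) htx
  exact hchain.unique (hpow.congr_of_eventuallyEq hscale)

theorem fderiv_fderiv_apply_const {f : E → F} {x : E} (hf : DifferentiableAt ℝ (fderiv ℝ f) x)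
    (v w : E) : fderiv ℝ (fun y => fderiv ℝ f y v) x w = fderiv ℝ (fderiv ℝ f) x w v := by
  simp [fderiv_clm_apply hf (differentiableAt_const v)]

theorem differentiableAt_fderiv {f : E → F} {x : E} (hf : ContDiffAt ℝ 2 f x) :
    DifferentiableAt ℝ (fderiv ℝ f) x :=
  (hf.fderiv_right (m := 1) one_add_one_eq_two.le).differentiableAt one_ne_zero

theorem fderiv_fderiv_smul_apply {f : E → ℝ} {g : E → F} {x : E} (hf : ContDiffAt ℝ 2 f x)
    (hg : ContDiffAt ℝ 2 g x) (v w : E) :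
    fderiv ℝ (fderiv ℝ fun y => f y • g y) x v w =
      f x • fderiv ℝ (fderiv ℝ g) x v w + fderiv ℝ f x v • fderiv ℝ g x w +
        fderiv ℝ f x w • fderiv ℝ g x v + fderiv ℝ (fderiv ℝ f) x v w • g x := by
  have hf₁ : DifferentiableAt ℝ f x := hf.differentiableAt two_ne_zero
  have hg₁ : DifferentiableAt ℝ g x := hg.differentiableAt two_ne_zero
  have hf₂ : DifferentiableAt ℝ (fderiv ℝ f) x := differentiableAt_fderiv hf
  have hg₂ : DifferentiableAt ℝ (fderiv ℝ g) x := differentiableAt_fderiv hg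
  have hfirst : (fun y => fderiv ℝ (fun y => f y • g y) y w) =ᶠ[𝓝 x]
      fun y => f y • fderiv ℝ g y w + fderiv ℝ f y w • g y := by
    filter_upwards [hf.eventually (by simp), hg.eventually (by simp)] with y hfy hgy
    simp [fderiv_fun_smul (hfy.differentiableAt two_ne_zero) (hgy.differentiableAt two_ne_zero)]
  have hfw : DifferentiableAt ℝ (fun y => fderiv ℝ f y w) x := hf₂.clm_apply (by fun_prop)
  have hgw : DifferentiableAt ℝ (fun y => fderiv ℝ g y w) x := hg₂.clm_apply (by fun_prop)
  rw [← fderiv_fderiv_apply_const (differentiableAt_fderiv (hf.fun_smul hg)), hfirst.fderiv_eq,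
    fderiv_fun_add (hf₁.fun_smul hgw) (hfw.fun_smul hg₁), fderiv_fun_smul hf₁ hgw,
    fderiv_fun_smul hfw hg₁]
  simp only [fderiv_fderiv_apply_const hf₂, fderiv_fderiv_apply_const hg₂, add_apply, smul_apply,
    ContinuousLinearMap.smulRight_apply]
  abel

end NormedSpace

variable [InnerProductSpace ℝ E]

theorem fderiv_fderiv_norm_sq_apply (x v w : E) :
    fderiv ℝ (fderiv ℝ fun y : E => ‖y‖ ^ 2) x v w = 2 * ⟪v, w⟫_ℝ := by
  rw [fderiv_norm_sq, fderiv_const_smul (innerSL ℝ).differentiableAt, ContinuousLinearMap.fderiv,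
    smul_apply, smul_apply, innerSL_apply_apply, two_smul, two_mul]

variable [FiniteDimensional ℝ E]

theorem laplacian_eq_sum_fderiv_fderiv [Fintype ι] (b : OrthonormalBasis ι ℝ E) (f : E → F)
    (x : E) : Δ f x = ∑ i, fderiv ℝ (fderiv ℝ f) x (b i) (b i) := by
  simp [laplacian_eq_iteratedFDeriv_orthonormalBasis f b, iteratedFDeriv_two_apply]

theorem laplacian_const_smul (c : ℝ) (f : E → F) : Δ (c • f) = c • Δ f := by
  ext x
  simp [laplacian_eq_sum_fderiv_fderiv (stdOrthonormalBasis ℝ E), fderiv_const_smul_field,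
    fderiv_const_smul_field (F := E →L[ℝ] F), Finset.smul_sum]

theorem laplacian_comp_const_smul (c : ℝ) (f : E → F) (x : E) :
    Δ (fun y => f (c • y)) x = c ^ 2 • Δ f (c • x) := by
  have hfirst : fderiv ℝ (fun y => f (c • y)) = c • fun y => fderiv ℝ f (c • y) :=
    funext fun _ => fderiv_comp_smul c
  have hsecond : fderiv ℝ (fderiv ℝ fun y => f (c • y)) x =
      c ^ 2 • fderiv ℝ (fderiv ℝ f) (c • x) := by
    rw [hfirst, fderiv_const_smul_field (F := E →L[ℝ] F), Pi.smul_apply, fderiv_comp_smul,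
      smul_smul, sq]
  simp [laplacian_eq_sum_fderiv_fderiv (stdOrthonormalBasis ℝ E), hsecond, Finset.smul_sum]

theorem laplacian_fun_smul [Fintype ι] (b : OrthonormalBasis ι ℝ E) {f : E → ℝ} {g : E → F}
    {x : E} (hf : ContDiffAt ℝ 2 f x) (hg : ContDiffAt ℝ 2 g x) :
    Δ (fun y => f y • g y) x =
      f x • Δ g x + (2 : ℝ) • ∑ i, fderiv ℝ f x (b i) • fderiv ℝ g x (b i) + Δ f x • g x := by
  simp only [laplacian_eq_sum_fderiv_fderiv b, fderiv_fderiv_smul_apply hf hg,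
    Finset.sum_add_distrib, Finset.smul_sum, Finset.sum_smul, two_smul]
  abel

theorem laplacian_norm_sq (x : E) : Δ (fun y : E => ‖y‖ ^ 2) x = 2 * finrank ℝ E := by
  simp [laplacian_eq_sum_fderiv_fderiv (stdOrthonormalBasis ℝ E), fderiv_fderiv_norm_sq_apply,
    mul_comm]

theorem laplacian_norm_sq_smul {f : E → F} {x : E} (hf : ContDiffAt ℝ 2 f x) :
    Δ (fun y => ‖y‖ ^ 2 • f y) x =
      ‖x‖ ^ 2 • Δ f x + (4 : ℝ) • fderiv ℝ f x x + (2 * finrank ℝ E : ℝ) • f x := by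
  let b := stdOrthonormalBasis ℝ E
  have hcross : ∑ i, fderiv ℝ (fun y : E => ‖y‖ ^ 2) x (b i) • fderiv ℝ f x (b i) =
      (2 : ℝ) • fderiv ℝ f x x := by
    have hexpand : fderiv ℝ f x x = ∑ i, ⟪b i, x⟫_ℝ • fderiv ℝ f x (b i) := by
      simpa using congrArg (fderiv ℝ f x) (b.sum_repr' x).symm
    simp [hexpand, Finset.smul_sum, smul_smul, real_inner_comm]
  rw [laplacian_fun_smul b (contDiff_norm_sq ℝ).contDiffAt hf, hcross, laplacian_norm_sq, smul_smul]
  norm_num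

section Iterate

variable {u : E → F} {s : Set E} {w : ℝ} {k : ℕ}

theorem contDiffOn_laplacian {m n : WithTop ℕ∞} (hs : IsOpen s) (hu : ContDiffOn ℝ n u s)
    (hmn : m + 2 ≤ n) : ContDiffOn ℝ m (Δ u) s := by
  have hu₁ : ContDiffOn ℝ (m + 1) (fderiv ℝ u) s :=
    hu.fderiv_of_isOpen hs (by rwa [add_assoc, one_add_one_eq_two])
  have hu₂ : ContDiffOn ℝ m (fderiv ℝ (fderiv ℝ u)) s := hu₁.fderiv_of_isOpen hs le_rfl
  rw [funext (laplacian_eq_sum_fderiv_fderiv (stdOrthonormalBasis ℝ E) u)]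
  fun_prop

theorem contDiffOn_laplacian_iterate {m n : WithTop ℕ∞} (hs : IsOpen s) (hu : ContDiffOn ℝ n u s)
    (hmn : m + (2 * k : ℕ) ≤ n) : ContDiffOn ℝ m (Δ^[k] u) s := by
  induction k generalizing m with
  | zero => exact hu.of_le (by simpa using hmn)
  | succ k ih =>
    rw [Function.iterate_succ_apply']
    refine contDiffOn_laplacian (n := m + 2) hs (ih ?_) le_rfl
    rwa [add_assoc, ← Nat.cast_two, ← Nat.cast_add, add_comm 2, ← mul_add_one]

theorem IsHomogeneousOn.laplacian (hhom : IsHomogeneousOn w u s) (hs : IsOpen s) :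
    IsHomogeneousOn (w - 2) (Δ u) s := by
  intro t ht x hx htx
  have hscale : (fun y => u (t • y)) =ᶠ[𝓝 x] t ^ w • u := by
    have hmem : ∀ᶠ y in 𝓝 x, t • y ∈ s :=
      (continuous_const_smul t).continuousAt.eventually_mem (hs.mem_nhds htx)
    filter_upwards [hs.mem_nhds hx, hmem] with y hy hty using hhom t ht y hy hty
  have hlap : t ^ 2 • Δ u (t • x) = t ^ w • Δ u x := by
    rw [← laplacian_comp_const_smul, (laplacian_congr_nhds hscale).eq_of_nhds,
      laplacian_const_smul, Pi.smul_apply]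
  rw [Real.rpow_sub ht, Real.rpow_two, div_eq_inv_mul, mul_smul, ← hlap,
    inv_smul_smul₀ (by positivity)]

theorem IsHomogeneousOn.laplacian_iterate (hhom : IsHomogeneousOn w u s) (hs : IsOpen s)
    (k : ℕ) : IsHomogeneousOn (w - 2 * k) (Δ^[k] u) s := by
  induction k with
  | zero => simpa using hhom
  | succ k ih =>
    rw [Function.iterate_succ_apply']
    convert ih.laplacian hs using 1
    push_cast
    ring

theorem IsHomogeneousOn.laplacian_norm_sq_smul {x : E} (hhom : IsHomogeneousOn w u s)
    (hs : s ∈ 𝓝 x) (hu : ContDiffAt ℝ 2 u x) :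
    Δ (fun y => ‖y‖ ^ 2 • u y) x = ‖x‖ ^ 2 • Δ u x + (4 * w + 2 * finrank ℝ E) • u x := by
  rw [_root_.laplacian_norm_sq_smul hu,
    hhom.fderiv_apply_self hs (hu.differentiableAt two_ne_zero)]
  module

theorem IsHomogeneousOn.laplacian_iterate_succ_norm_sq_smul (hhom : IsHomogeneousOn w u s)
    (hs : IsOpen s) (hu : ContDiffOn ℝ (2 * (k + 1) : ℕ) u s) {x : E} (hx : x ∈ s) :
    Δ^[k + 1] (fun y => ‖y‖ ^ 2 • u y) x =
      ‖x‖ ^ 2 • Δ^[k + 1] u x + (2 * (k + 1) * (2 * w + finrank ℝ E - 2 * k)) • Δ^[k] u x := by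
  induction k generalizing x with
  | zero =>
    have hu₂ : ContDiffAt ℝ 2 u x := hu.contDiffAt (hs.mem_nhds hx)
    rw [zero_add, Function.iterate_one, Function.iterate_zero_apply,
      hhom.laplacian_norm_sq_smul (hs.mem_nhds hx) hu₂]
    push_cast
    module
  | succ k ih =>
    set c : ℝ := 2 * (k + 1) * (2 * w + finrank ℝ E - 2 * k) with hc
    have hih : Δ^[k + 1] (fun y => ‖y‖ ^ 2 • u y) =ᶠ[𝓝 x]
        (fun y => ‖y‖ ^ 2 • Δ^[k + 1] u y) + c • Δ^[k] u := by
      filter_upwards [hs.mem_nhds hx] with y hy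
      exact ih (hu.of_le (by norm_cast; lia)) hy
    have hk₁ : ContDiffAt ℝ 2 (Δ^[k + 1] u) x :=
      (contDiffOn_laplacian_iterate hs hu (by norm_cast; lia)).contDiffAt (hs.mem_nhds hx)
    have hk : ContDiffAt ℝ 2 (c • Δ^[k] u) x :=
      ((contDiffOn_laplacian_iterate hs hu (by norm_cast; lia)).contDiffAt
        (hs.mem_nhds hx)).const_smul c
    rw [Function.iterate_succ_apply', (laplacian_congr_nhds hih).eq_of_nhds,
      ((contDiff_norm_sq ℝ).contDiffAt.fun_smul hk₁).laplacian_add hk,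
      (hhom.laplacian_iterate hs (k + 1)).laplacian_norm_sq_smul (hs.mem_nhds hx) hk₁,
      laplacian_const_smul, Pi.smul_apply, hc]
    simp only [Function.iterate_succ_apply']
    push_cast
    module

theorem laplacian_pow_comm_normSq_homogeneous_general (hk : 1 ≤ k) (hs : IsOpen s)
    (hu : ContDiffOn ℝ (2 * k : ℕ) u s) (hhom : IsHomogeneousOn w u s) :
    (∀ x ∈ s, Δ^[k] (fun y => ‖y‖ ^ 2 • u y) x =
      ‖x‖ ^ 2 • Δ^[k] u x +
        (2 * k * (2 * w + finrank ℝ E - 2 * k + 2)) • Δ^[k - 1] u x) ∧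
    (w = k - 1 - finrank ℝ E / 2 →
      ∀ x ∈ s, Δ^[k] (fun y => ‖y‖ ^ 2 • u y) x = ‖x‖ ^ 2 • Δ^[k] u x) := by
  obtain ⟨k, rfl⟩ := Nat.exists_eq_add_of_le' hk
  have hcomm (x : E) (hx : x ∈ s) := hhom.laplacian_iterate_succ_norm_sq_smul hs hu hx
  refine ⟨fun x hx => ?_, fun hw x hx => ?_⟩
  · rw [hcomm x hx, Nat.add_sub_cancel]
    push_cast
    module
  · have hcoeff : 2 * w + finrank ℝ E - 2 * k = 0 := by rw [hw]; push_cast; ring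
    rw [hcomm x hx, hcoeff, mul_zero, zero_smul, add_zero]

end Iterate

section Coordinates

variable {N : ℕ} {f g : EuclideanSpace ℝ (Fin N) → ℝ} {s : Set (EuclideanSpace ℝ (Fin N))}
  {x : EuclideanSpace ℝ (Fin N)}

theorem lap_congr_nhds (h : f =ᶠ[𝓝 x] g) : lap f x = lap g x := by
  refine Finset.sum_congr rfl fun i _ => ?_
  have hi : (fun y => fderiv ℝ f y (EuclideanSpace.single i 1)) =ᶠ[𝓝 x]
      fun y => fderiv ℝ g y (EuclideanSpace.single i 1) :=
    h.fderiv.fun_comp fun L => L (EuclideanSpace.single i 1)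
  rw [hi.fderiv_eq]

theorem lap_eq_laplacian (hf : DifferentiableAt ℝ (fderiv ℝ f) x) : lap f x = Δ f x := by
  simp [lap, laplacian_eq_sum_fderiv_fderiv (EuclideanSpace.basisFun (Fin N) ℝ),
    fderiv_fderiv_apply_const hf]

theorem lap_iterate_eqOn_laplacian_iterate {k : ℕ} (hs : IsOpen s)
    (hf : ContDiffOn ℝ (2 * k : ℕ) f s) : Set.EqOn (lap^[k] f) (Δ^[k] f) s := by
  induction k with
  | zero => exact fun _ _ => rfl
  | succ k ih =>
    intro x hx
    have hih : lap^[k] f =ᶠ[𝓝 x] Δ^[k] f :=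
      (ih (hf.of_le (by norm_cast; lia))).eventuallyEq_of_mem (hs.mem_nhds hx)
    have hk : ContDiffAt ℝ 2 (Δ^[k] f) x :=
      (contDiffOn_laplacian_iterate hs hf (by norm_cast; lia)).contDiffAt (hs.mem_nhds hx)
    rw [Function.iterate_succ_apply', Function.iterate_succ_apply', lap_congr_nhds hih,
      lap_eq_laplacian (differentiableAt_fderiv hk)]

end Coordinates

end

/-- For `u` homogeneous of degree `w` on `ℝᴺ \ {0}`,
`Δᵏ(|x|²u) = |x|²Δᵏu + 2k(2w + N - 2k + 2)Δ^{k-1}u`; in particular `Δᵏ` commutes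
with multiplication by `|x|²` on functions of the critical homogeneity
`w = k - 1 - N/2`.  This is the key step in the first GJMS construction. -/
theorem laplacian_pow_comm_normSq_homogeneous
    (N k : ℕ) (hN : 1 ≤ N) (hk : 1 ≤ k) (w : ℝ)
    (u : EuclideanSpace ℝ (Fin N) → ℝ)
    (hu : ContDiffOn ℝ (⊤ : ℕ∞) u {(0 : EuclideanSpace ℝ (Fin N))}ᶜ)
    (hhom : ∀ t : ℝ, 0 < t → ∀ x : EuclideanSpace ℝ (Fin N), x ≠ 0 →
      u (t • x) = t ^ w * u x) :
    (∀ x : EuclideanSpace ℝ (Fin N), x ≠ 0 →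
      lap^[k] (fun y => ‖y‖ ^ 2 * u y) x
        = ‖x‖ ^ 2 * lap^[k] u x
          + 2 * k * (2 * w + N - 2 * k + 2) * lap^[k - 1] u x)
    ∧ (w = (k : ℝ) - 1 - N / 2 →
      ∀ x : EuclideanSpace ℝ (Fin N), x ≠ 0 →
        lap^[k] (fun y => ‖y‖ ^ 2 * u y) x = ‖x‖ ^ 2 * lap^[k] u x) := by
  have hlap {f : EuclideanSpace ℝ (Fin N) → ℝ} (hf : ContDiffOn ℝ (⊤ : ℕ∞) f {0}ᶜ) (m : ℕ) :
      Set.EqOn (lap^[m] f) (Laplacian.laplacian^[m] f) {0}ᶜ :=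
    lap_iterate_eqOn_laplacian_iterate isOpen_compl_singleton (contDiffOn_infty.1 hf _)
  have hmul : ContDiffOn ℝ (⊤ : ℕ∞) (fun y => ‖y‖ ^ 2 * u y) {0}ᶜ :=
    (contDiff_norm_sq ℝ).contDiffOn.mul hu
  have hmain := laplacian_pow_comm_normSq_homogeneous_general hk isOpen_compl_singleton
    (contDiffOn_infty.1 hu _) fun t ht x hx _ => hhom t ht x hx
  simp only [smul_eq_mul, finrank_euclideanSpace_fin] at hmain
  refine ⟨fun x hx => ?_, fun hw x hx => ?_⟩
  · rw [hlap hmul k hx, hlap hu k hx, hlap hu (k - 1) hx, hmain.1 x hx]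
  · rw [hlap hmul k hx, hlap hu k hx, hmain.2 hw x hx]
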